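/- For every λ, b ∈ ℂ, the operators L^{λ,b}_n := L¹_n + ((λ − 1/2)(n + 1/2) − b) · h_n + M(λ,b) · δ_{n,0} · id_F, where M(λ,b) = (16b² + 8b(1−2λ) − 3(1−2λ)²)/32, satisfy the Virasoro relations with central charge −12λ² + 12λ − 2. In particular, for λ = 1/2 and b = 0 one recovers L^{1/2,0}_n = L¹_n with central charge 1. (These are the modes of the two-parameter family of 2-point-local Virasoro fields L^{λ,b}(z²) = L¹(z²) + (1/2 − λ)(1/(2z²))∂_z h^D(z) − (b/z³)h^D(z) + M(λ,b)/z⁴ on F^{⊗1/2}.) -/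

import Mathlib

noncomputable section

/-- The neutral fermion Fock space `F = F^{⊗1/2}`: the complex vector space with
basis `{e_S : S a finite subset of ℕ}`. -/
abbrev FockD : Type := Finset ℕ →₀ ℂ

/-- Basis vector `e_S`. -/
def eD (S : Finset ℕ) : FockD := Finsupp.single S 1

/-- Action of the fermion mode `a_m` on the basis vector `e_S`. -/
def aVec (m : ℤ) (S : Finset ℕ) : FockD :=
  if 0 ≤ m then
    if m.toNat ∈ S then 0
    else ((-1 : ℂ) ^ (S.filter (fun s => m.toNat < s)).card) • eD (insert m.toNat S)
  else
    if (-m - 1).toNat ∈ S then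
      ((-1 : ℂ) ^ (S.filter (fun s => (-m - 1).toNat < s)).card) • eD (S.erase ((-m - 1).toNat))
    else 0

/-- The fermion mode `a_m` as a linear operator on `F`. -/
def aOp (m : ℤ) : FockD →ₗ[ℂ] FockD :=
  Finsupp.lsum ℂ fun S => LinearMap.toSpanSingleton ℂ FockD (aVec m S)

/-- Fermionic normal ordered product `:a_i a_j:`. -/
def NO (i j : ℤ) : FockD →ₗ[ℂ] FockD :=
  if 0 ≤ i then (aOp i).comp (aOp j) else -((aOp j).comp (aOp i))

/-- Heisenberg operator `h_n = (1/2) ∑_{i∈ℤ} (−1)^{i+1} :a_i a_{−2n−1−i}:`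
(on each vector only finitely many summands are nonzero). -/
def hD (n : ℤ) (x : FockD) : FockD :=
  (1 / 2 : ℂ) • ∑ᶠ i : ℤ, ((-1 : ℂ) ^ (i + 1)) • NO i (-2 * n - 1 - i) x

/-- Virasoro operator `L^{1/2}_m = (1/2) ∑_{i∈ℤ} i · :a_i a_{−m−i−1}:`. -/
def LhalfD (m : ℤ) (x : FockD) : FockD :=
  (1 / 2 : ℂ) • ∑ᶠ i : ℤ, (i : ℂ) • NO i (-m - i - 1) x

/-- 2-point Virasoro operator `L¹_n = (1/2) ∑_{j∈ℤ} :h_j h_{n−j}:`, where the bosonic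
normal ordered product is `:h_j h_k: = h_j h_k` if `j ≤ k` and `h_k h_j` otherwise. -/
def L1D (n : ℤ) (x : FockD) : FockD :=
  (1 / 2 : ℂ) • ∑ᶠ j : ℤ, if j ≤ n - j then hD j (hD (n - j) x) else hD (n - j) (hD j x)

/-- Charge `c(S) = #{s ∈ S : s odd} − #{s ∈ S : s even}`. -/
def chg (S : Finset ℕ) : ℤ :=
  ((S.filter fun s => Odd s).card : ℤ) - ((S.filter fun s => Even s).card : ℤ)

/-- Charge-`n` component `F_{(n)}`: the span of the `e_S` with `c(S) = n`. -/
def FockComp (n : ℤ) : Submodule ℂ FockD :=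
  Submodule.span ℂ {x : FockD | ∃ S : Finset ℕ, chg S = n ∧ x = eD S}

/-- Index set of the vacuum-like vector `v_n`. -/
def vSet (n : ℤ) : Finset ℕ :=
  if 0 ≤ n then (Finset.range n.toNat).image fun i => 2 * i + 1
  else (Finset.range (-n).toNat).image fun i => 2 * i

/-- Vacuum-like vector `v_n` (`v_0 = e_∅`, `v_n = e_{{1,3,…,2n−1}}`,
`v_{−n} = e_{{0,2,…,2n−2}}` for `n > 0`). -/
def vD (n : ℤ) : FockD := eD (vSet n)

/-- The constant `M(λ,b) = (16b² + 8b(1−2λ) − 3(1−2λ)²)/32`. -/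
def Mconst (lam b : ℂ) : ℂ :=
  (16 * b ^ 2 + 8 * b * (1 - 2 * lam) - 3 * (1 - 2 * lam) ^ 2) / 32

/-- The two-parameter family of 2-point Virasoro operators
`L^{λ,b}_n = L¹_n + ((λ − 1/2)(n + 1/2) − b) h_n + M(λ,b) δ_{n,0} id`. -/
def Llb (lam b : ℂ) (n : ℤ) (x : FockD) : FockD :=
  L1D n x + ((lam - 1 / 2) * ((n : ℂ) + 1 / 2) - b) • hD n x
    + (if n = 0 then Mconst lam b else 0) • x

/-! ### Canonical anticommutation relations -/

lemma aOp_eD (m : ℤ) (S : Finset ℕ) : aOp m (eD S) = aVec m S := by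
  simp [aOp, eD]

/-- The sign attached to position `t` in `S`. -/
def sg (t : ℕ) (S : Finset ℕ) : ℂ := (-1 : ℂ) ^ (S.filter (fun s => t < s)).card

lemma sg_insert (t u : ℕ) (S : Finset ℕ) (h : u ∉ S) :
    sg t (insert u S) = if t < u then - sg t S else sg t S := by
  unfold sg
  rw [Finset.filter_insert]
  split_ifs with h1
  · rw [Finset.card_insert_of_notMem (by simp [h]), pow_succ]; ring
  · rfl

lemma sg_erase (t u : ℕ) (S : Finset ℕ) (h : u ∈ S) :
    sg t (S.erase u) = if t < u then - sg t S else sg t S := by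
  have := sg_insert t u (S.erase u) (by simp)
  rw [Finset.insert_erase h] at this
  rw [this]
  split_ifs <;> simp

lemma sg_mul_self (t : ℕ) (S : Finset ℕ) : sg t S * sg t S = 1 := by
  unfold sg
  rw [← mul_pow]; simp

lemma cr_eD (t : ℕ) (S : Finset ℕ) :
    aOp (t : ℤ) (eD S) = if t ∈ S then 0 else sg t S • eD (insert t S) := by
  rw [aOp_eD]; simp [aVec, sg]

lemma an_eD (t : ℕ) (S : Finset ℕ) :
    aOp (-(t : ℤ) - 1) (eD S) = if t ∈ S then sg t S • eD (S.erase t) else 0 := by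
  rw [aOp_eD]
  have : ¬ (0 ≤ -(t : ℤ) - 1) := by omega
  have h2 : (-(-(t : ℤ) - 1) - 1).toNat = t := by omega
  simp only [aVec, this, h2, sg, if_false]

lemma ext_eD {f g : FockD →ₗ[ℂ] FockD} (h : ∀ S, f (eD S) = g (eD S)) : f = g := by
  apply Finsupp.lhom_ext
  intro S c
  have : (Finsupp.single S c : FockD) = c • eD S := by simp [eD]
  rw [this, map_smul, map_smul, h]

lemma int_cases (m : ℤ) : (∃ t : ℕ, m = t) ∨ ∃ t : ℕ, m = -(t : ℤ) - 1 := by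
  rcases lt_or_ge m 0 with h | h
  · exact Or.inr ⟨(-m - 1).toNat, by omega⟩
  · exact Or.inl ⟨m.toNat, by omega⟩

lemma cr_cr (t u : ℕ) (S : Finset ℕ) :
    aOp (t : ℤ) (aOp (u : ℤ) (eD S)) + aOp (u : ℤ) (aOp (t : ℤ) (eD S)) = 0 := by
  rcases eq_or_ne t u with rfl | htu
  · by_cases h : t ∈ S <;> simp [cr_eD, h]
  · by_cases h1 : t ∈ S <;> by_cases h2 : u ∈ S <;> simp [cr_eD, h1, h2, htu, htu.symm]
    rw [sg_insert _ _ _ h1, sg_insert _ _ _ h2, Finset.insert_comm]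
    simp only [smul_smul, ← add_smul]
    rcases lt_or_gt_of_ne htu with h | h
    · simp [h, h.not_gt, mul_comm]
    · simp [h, h.not_gt, mul_comm]

lemma an_an (t u : ℕ) (S : Finset ℕ) :
    aOp (-(t : ℤ) - 1) (aOp (-(u : ℤ) - 1) (eD S))
      + aOp (-(u : ℤ) - 1) (aOp (-(t : ℤ) - 1) (eD S)) = 0 := by
  rcases eq_or_ne t u with rfl | htu
  · by_cases h : t ∈ S <;> simp [an_eD, h]
  · by_cases h1 : t ∈ S <;> by_cases h2 : u ∈ S <;> simp [an_eD, h1, h2, htu, htu.symm]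
    rw [sg_erase _ _ _ h1, sg_erase _ _ _ h2, Finset.erase_right_comm]
    simp only [smul_smul, ← add_smul]
    rcases lt_or_gt_of_ne htu with h | h
    · simp [h, h.not_gt, mul_comm]
    · simp [h, h.not_gt, mul_comm]

lemma cr_an (t u : ℕ) (S : Finset ℕ) :
    aOp (t : ℤ) (aOp (-(u : ℤ) - 1) (eD S))
      + aOp (-(u : ℤ) - 1) (aOp (t : ℤ) (eD S)) = if t = u then eD S else 0 := by
  rcases eq_or_ne t u with rfl | htu
  · by_cases h : t ∈ S
    · simp [an_eD, cr_eD, h, smul_smul, sg_erase _ _ _ h, sg_mul_self]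
    · simp [an_eD, cr_eD, h, smul_smul, sg_insert _ _ _ h, sg_mul_self]
  · by_cases h1 : t ∈ S <;> by_cases h2 : u ∈ S <;>
      simp [an_eD, cr_eD, h1, h2, htu, htu.symm]
    rw [sg_insert _ _ _ h1, sg_erase _ _ _ h2, Finset.erase_insert_of_ne htu]
    simp only [smul_smul, ← add_smul]
    rcases lt_or_gt_of_ne htu with h | h
    · simp [h, h.not_gt, mul_comm]
    · simp [h, h.not_gt, mul_comm]

lemma anticomm (m n : ℤ) (x : FockD) :
    aOp m (aOp n x) + aOp n (aOp m x) = (if m + n = -1 then (1 : ℂ) else 0) • x := by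
  have : (aOp m).comp (aOp n) + (aOp n).comp (aOp m)
      = (if m + n = -1 then (1 : ℂ) else 0) • LinearMap.id := by
    apply ext_eD
    intro S
    simp only [LinearMap.add_apply, LinearMap.comp_apply, LinearMap.smul_apply, LinearMap.id_apply]
    rcases int_cases m with ⟨t, rfl⟩ | ⟨t, rfl⟩ <;> rcases int_cases n with ⟨u, rfl⟩ | ⟨u, rfl⟩
    · rw [cr_cr, if_neg (by omega), zero_smul]
    · rw [cr_an]
      by_cases h : t = u
      · rw [if_pos h, if_pos (by omega), one_smul]
      · rw [if_neg h, if_neg (by omega), zero_smul]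
    · rw [add_comm, cr_an]
      by_cases h : u = t
      · rw [if_pos h, if_pos (by omega), one_smul]
      · rw [if_neg h, if_neg (by omega), zero_smul]
    · rw [an_an, if_neg (by omega), zero_smul]
  exact congrArg (fun f => f x) this

lemma a_swap (m n : ℤ) (x : FockD) :
    aOp m (aOp n x) = (if m + n = -1 then (1 : ℂ) else 0) • x - aOp n (aOp m x) := by
  rw [← anticomm m n x]; abel

lemma aOp_local (x : FockD) : ∃ K : ℤ, 0 ≤ K ∧ ∀ j, j < -K → aOp j x = 0 := by
  induction x using Finsupp.induction_linear with
  | zero => exact ⟨0, le_rfl, by simp⟩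
  | add f g hf hg =>
    obtain ⟨K, hK0, hK⟩ := hf
    obtain ⟨K', hK0', hK'⟩ := hg
    exact ⟨K + K', by omega, fun j hj => by
      rw [map_add, hK j (by omega), hK' j (by omega), add_zero]⟩
  | single S c =>
    refine ⟨(S.sup id : ℕ) + 1, by omega, fun j hj => ?_⟩
    have : (Finsupp.single S c : FockD) = c • eD S := by simp [eD]
    rw [this, map_smul]
    rcases int_cases j with ⟨t, rfl⟩ | ⟨t, rfl⟩
    · omega
    · rw [an_eD, if_neg, smul_zero]
      intro ht
      have : t ≤ S.sup id := Finset.le_sup (f := id) ht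
      omega

/-! ### Locally finite sums of operators -/

/-- The sum of a locally finite family of operators. -/
def locSum {ι : Type} (f : ι → FockD →ₗ[ℂ] FockD)
    (hf : ∀ x, (Function.support fun i => f i x).Finite) : FockD →ₗ[ℂ] FockD where
  toFun x := ∑ᶠ i, f i x
  map_add' x y := by
    simp only [map_add]
    exact finsum_add_distrib (hf x) (hf y)
  map_smul' c x := by
    simp only [map_smul, RingHom.id_apply]
    rw [smul_finsum]

lemma finsum_ite_eq_single {ι : Type} [DecidableEq ι] (a : ι) (y : ι → FockD) :
    ∑ᶠ i, (if i = a then y i else 0) = y a := by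
  rw [finsum_eq_single _ a]
  · simp
  · intro i hi; simp [hi]

lemma ite_supp {ι : Type} [DecidableEq ι] (a : ι) (y : ι → FockD) :
    (Function.support fun i => if i = a then y i else 0).Finite := by
  apply (Set.finite_singleton a).subset
  intro i hi
  by_contra h
  apply hi
  simp only [Set.mem_singleton_iff] at h
  simp [h]

/-! ### The Heisenberg modes -/

lemma NO_apply (i j : ℤ) (x : FockD) :
    NO i j x = if 0 ≤ i then aOp i (aOp j x) else - aOp j (aOp i x) := by
  unfold NO; split_ifs <;> simp

/-- Summands of `h_n`. -/
def hFam (n i : ℤ) : FockD →ₗ[ℂ] FockD := ((-1 : ℂ) ^ (i + 1)) • NO i (-2 * n - 1 - i)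

lemma hFam_fin (n : ℤ) (x : FockD) : (Function.support fun i => hFam n i x).Finite := by
  obtain ⟨K, hK0, hK⟩ := aOp_local x
  apply (Set.finite_Icc (-K) (-2 * n - 1 + K)).subset
  intro i hi
  by_contra h
  apply hi
  simp only [Set.mem_Icc, not_and_or, not_le] at h
  simp only [hFam, LinearMap.smul_apply, NO_apply]
  split_ifs with h0
  · rw [hK (-2 * n - 1 - i) (by omega)]; simp
  · by_cases h1 : i < -K
    · rw [hK i h1]; simp
    · rcases h with h | h
      · omega
      · rw [a_swap, if_neg (by omega), hK (-2 * n - 1 - i) (by omega)]; simp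

/-- `h_n` as a linear map. -/
def hL (n : ℤ) : FockD →ₗ[ℂ] FockD := (1 / 2 : ℂ) • locSum (hFam n) (hFam_fin n)

lemma hD_eq (n : ℤ) (x : FockD) : hD n x = hL n x := rfl

lemma hL_apply (n : ℤ) (x : FockD) : hL n x = (1 / 2 : ℂ) • ∑ᶠ i, hFam n i x := rfl

lemma h_local (x : FockD) : ∃ K : ℤ, 0 ≤ K ∧ ∀ n, K < n → hL n x = 0 := by
  obtain ⟨K, hK0, hK⟩ := aOp_local x
  refine ⟨K, hK0, fun n hn => ?_⟩
  rw [hL_apply]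
  have : ∀ i, hFam n i x = 0 := by
    intro i
    simp only [hFam, LinearMap.smul_apply, NO_apply]
    split_ifs with h0
    · rw [hK (-2 * n - 1 - i) (by omega)]; simp
    · by_cases h1 : i < -K
      · rw [hK i h1]; simp
      · rw [a_swap, if_neg (by omega), hK (-2 * n - 1 - i) (by omega)]; simp
  simp [this]

lemma NO_comm (i j k : ℤ) (x : FockD) :
    NO i j (aOp k x) = aOp k (NO i j x) + (if j + k = -1 then (1 : ℂ) else 0) • aOp i x
      - (if i + k = -1 then (1 : ℂ) else 0) • aOp j x := by
  rw [NO_apply, NO_apply]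
  by_cases h : 0 ≤ i
  · rw [if_pos h, if_pos h, a_swap j k, map_sub, map_smul, a_swap i k]
    module
  · rw [if_neg h, if_neg h, a_swap i k, map_sub, map_smul, a_swap j k, map_neg]
    module

lemma hL_a (m k : ℤ) (x : FockD) :
    hL m (aOp k x) = aOp k (hL m x) + ((-1 : ℂ) ^ (k + 1)) • aOp (k - 2 * m) x := by
  have key : ∀ i, hFam m i (aOp k x) = (aOp k (hFam m i x)
      + (if i = k - 2 * m then ((-1 : ℂ) ^ (i + 1)) • aOp i x else 0))
      + (if i = -1 - k then -(((-1 : ℂ) ^ (i + 1)) • aOp (-2 * m - 1 - i) x) else 0) := by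
    intro i
    simp only [hFam, LinearMap.smul_apply, NO_comm, map_smul]
    have e1 : (-2 * m - 1 - i + k = -1) = (i = k - 2 * m) := by
      apply propext; constructor <;> intro h <;> omega
    have e2 : (i + k = -1) = (i = -1 - k) := by
      apply propext; constructor <;> intro h <;> omega
    simp only [e1, e2]
    split_ifs <;> simp [smul_add, smul_sub] <;> abel
  have hf : (Function.support fun i => aOp k (hFam m i x)).Finite := by
    apply (hFam_fin m x).subset
    intro i hi h
    exact hi (by simp only [h, map_zero])
  rw [hL_apply, hL_apply]
  simp only [key]
  rw [finsum_add_distrib _ (ite_supp _ _), finsum_add_distrib hf (ite_supp _ _),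
    finsum_ite_eq_single, finsum_ite_eq_single, map_smul, map_finsum _ (hFam_fin m x)]
  · have s1 : (-1 : ℂ) ^ (k - 2 * m + 1) = (-1 : ℂ) ^ (k + 1) := by
      rw [show k - 2 * m + 1 = (k + 1) + 2 * (-m) by ring, zpow_add₀ (by norm_num), zpow_mul]
      simp
    have s2 : (-1 : ℂ) ^ (-1 - k + 1) = - (-1 : ℂ) ^ (k + 1) := by
      rw [show -1 - k + 1 = (k + 1) + 2 * (-k) + (-1) by ring, zpow_add₀ (by norm_num),
        zpow_add₀ (by norm_num), zpow_mul]
      simp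
    have s3 : -2 * m - 1 - (-1 - k) = k - 2 * m := by ring
    rw [s1, s2, s3]
    module
  · exact (hf.union (ite_supp _ _)).subset (Function.support_add _ _)

lemma vac_an (k : ℤ) (hk : k < 0) : aOp k (eD ∅) = 0 := by
  rcases int_cases k with ⟨t, rfl⟩ | ⟨t, rfl⟩
  · omega
  · rw [an_eD]; simp

/-- Operators commuting with all fermion modes are determined by the vacuum. -/
lemma schur (T : FockD →ₗ[ℂ] FockD) (hT : ∀ k x, T (aOp k x) = aOp k (T x)) (c : ℂ)
    (h0 : T (eD ∅) = c • eD ∅) (x : FockD) : T x = c • x := by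
  have : T = c • LinearMap.id := by
    apply ext_eD
    intro S
    induction S using Finset.induction_on_max with
    | empty => simpa using h0
    | insert a S ha ih =>
      have e : eD (insert a S) = aOp (a : ℤ) (eD S) := by
        have h1 : a ∉ S := fun h => lt_irrefl _ (ha a h)
        have h2 : sg a S = 1 := by
          unfold sg
          rw [Finset.filter_false_of_mem (fun s hs => (ha s hs).not_gt)]; simp
        rw [cr_eD, if_neg h1, h2, one_smul]
      rw [e, hT, ih]; simp
  rw [this]; simp

/-! ### The energy operator -/

/-- Summands of the energy operator. -/
def dFam (i : ℕ) : FockD →ₗ[ℂ] FockD := (2 * (i : ℂ) + 1) • NO i (-1 - i)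

lemma dFam_fin (x : FockD) : (Function.support fun i => dFam i x).Finite := by
  obtain ⟨K, hK0, hK⟩ := aOp_local x
  apply (Set.finite_Iic K.toNat).subset
  intro i hi
  by_contra h
  apply hi
  simp only [Set.mem_Iic, not_le] at h
  simp only [dFam, LinearMap.smul_apply, NO_apply]
  rw [if_pos (by omega), hK (-1 - i) (by omega)]; simp

/-- The energy operator. -/
def eng : FockD →ₗ[ℂ] FockD := locSum dFam dFam_fin

lemma eng_apply (x : FockD) : eng x = ∑ᶠ i, dFam i x := rfl

lemma eng_zero (x : FockD) (h : ∀ k < 0, aOp k x = 0) : eng x = 0 := by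
  rw [eng_apply]
  have : ∀ i, dFam i x = 0 := by
    intro i
    simp only [dFam, LinearMap.smul_apply, NO_apply]
    rw [if_pos (by omega), h (-1 - i) (by omega)]; simp
  simp [this]

lemma eng_a (k : ℤ) (x : FockD) :
    eng (aOp k x) = aOp k (eng x) + (2 * (k : ℂ) + 1) • aOp k x := by
  have hf : (Function.support fun i => aOp k (dFam i x)).Finite := by
    apply (dFam_fin x).subset
    intro i hi h
    exact hi (by simp only [h, map_zero])
  rw [eng_apply, eng_apply, map_finsum _ (dFam_fin x)]
  rcases int_cases k with ⟨t, rfl⟩ | ⟨t, rfl⟩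
  · have key : ∀ i, dFam i (aOp t x) = aOp t (dFam i x)
        + (if i = t then (2 * (i : ℂ) + 1) • aOp i x else 0) := by
      intro i
      simp only [dFam, LinearMap.smul_apply, NO_comm, map_smul]
      by_cases h : i = t
      · rw [if_pos (by omega), if_neg (by omega), if_pos h]; simp
      · rw [if_neg (by omega), if_neg (by omega), if_neg h]; simp
    simp only [key]
    rw [finsum_add_distrib hf (ite_supp _ _), finsum_ite_eq_single]
    simp
  · have key : ∀ i, dFam i (aOp (-(t : ℤ) - 1) x) = aOp (-(t : ℤ) - 1) (dFam i x)
        + (if i = t then -((2 * (i : ℂ) + 1) • aOp (-1 - i) x) else 0) := by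
      intro i
      simp only [dFam, LinearMap.smul_apply, NO_comm, map_smul]
      by_cases h : i = t
      · rw [if_neg (by omega), if_pos (by omega), if_pos h]; simp [smul_add, sub_eq_add_neg]
      · rw [if_neg (by omega), if_neg (by omega), if_neg h]; simp
    simp only [key]
    rw [finsum_add_distrib hf (ite_supp _ _), finsum_ite_eq_single]
    have : (-1 - (t : ℤ)) = -(t : ℤ) - 1 := by ring
    rw [this]
    push_cast
    module

lemma eng_NO (i j : ℤ) (x : FockD) :
    eng (NO i j x) = NO i j (eng x) + (2 * ((i : ℂ) + j) + 2) • NO i j x := by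
  rw [NO_apply, NO_apply]
  split_ifs
  · rw [eng_a, eng_a, map_add, map_smul]; module
  · rw [map_neg, eng_a, eng_a, map_add, map_smul]; module

lemma eng_h (n : ℤ) (x : FockD) : eng (hL n x) = hL n (eng x) + (-4 * (n : ℂ)) • hL n x := by
  have key : ∀ i, eng (hFam n i x) = hFam n i (eng x) + (-4 * (n : ℂ)) • hFam n i x := by
    intro i
    simp only [hFam, LinearMap.smul_apply, map_smul, eng_NO]
    push_cast
    module
  rw [hL_apply, hL_apply, map_smul, map_finsum _ (hFam_fin n x)]
  simp only [key]
  rw [finsum_add_distrib (hFam_fin n _), ← smul_finsum]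
  · module
  · exact (hFam_fin n x).subset (Function.support_const_smul_subset (-4 * (n : ℂ))
      (fun i => hFam n i x))

/-- The commutator of two Heisenberg modes. -/
def hComm (m n : ℤ) : FockD →ₗ[ℂ] FockD := (hL m).comp (hL n) - (hL n).comp (hL m)

lemma hComm_apply (m n : ℤ) (x : FockD) :
    hComm m n x = hL m (hL n x) - hL n (hL m x) := rfl

lemma hComm_a (m n k : ℤ) (x : FockD) : hComm m n (aOp k x) = aOp k (hComm m n x) := by
  have p : ∀ m : ℤ, (-1 : ℂ) ^ (k - 2 * m + 1) = (-1 : ℂ) ^ (k + 1) := by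
    intro m
    rw [show k - 2 * m + 1 = (k + 1) + 2 * (-m) by ring, zpow_add₀ (by norm_num), zpow_mul]
    simp
  have e : k - 2 * m - 2 * n = k - 2 * n - 2 * m := by ring
  simp only [hComm_apply, hL_a, map_add, map_sub, map_smul, p, e]
  module

lemma hL_vac (m : ℤ) (hm : 0 ≤ m) : hL m (eD ∅) = 0 := by
  rw [hL_apply]
  have : ∀ i, hFam m i (eD ∅) = 0 := by
    intro i
    simp only [hFam, LinearMap.smul_apply, NO_apply]
    split_ifs with h0
    · rw [vac_an (-2 * m - 1 - i) (by omega)]; simp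
    · rw [vac_an i (by omega)]; simp
  simp [this]

lemma hComm_of_ne (m n : ℤ) (h : m + n ≠ 0) (x : FockD) : hComm m n x = 0 := by
  have h1 : hComm m n (eD ∅) = 0 := by
    have e0 : eng (eD ∅) = 0 := eng_zero _ vac_an
    have e1 : eng (hComm m n (eD ∅)) = 0 := by
      apply eng_zero
      intro k hk
      rw [← hComm_a, vac_an k hk, map_zero]
    have e2 : eng (hComm m n (eD ∅)) = (-4 * ((m : ℂ) + n)) • hComm m n (eD ∅) := by
      simp only [hComm_apply, map_sub, eng_h, map_add, map_smul, e0, map_zero]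
      module
    rw [e1] at e2
    have h' : (-4 * ((m : ℂ) + n)) ≠ 0 := by
      have : ((m : ℂ) + n) ≠ 0 := by exact_mod_cast h
      simp [this]
    exact (smul_eq_zero.mp e2.symm).resolve_left h'
  have := schur (hComm m n) (hComm_a m n) 0 (by simpa using h1) x
  simpa using this

lemma hL_vac_neg (t : ℕ) : hL (t : ℤ) (hL (-(t : ℤ)) (eD ∅)) = (t : ℂ) • eD ∅ := by
  have hsum : hL (-(t : ℤ)) (eD ∅) = (1 / 2 : ℂ) •
      ∑ i ∈ Finset.Ico (0 : ℤ) (2 * t), hFam (-(t : ℤ)) i (eD ∅) := by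
    rw [hL_apply, finsum_eq_sum_of_support_subset]
    intro i hi
    by_contra h
    apply hi
    simp only [Finset.coe_Ico, Set.mem_Ico, not_and_or, not_lt, not_le] at h
    simp only [hFam, LinearMap.smul_apply, NO_apply]
    split_ifs with h0
    · rw [vac_an (-2 * -(t : ℤ) - 1 - i) (by omega)]; simp
    · rw [vac_an i (by omega)]; simp
  rw [hsum, map_smul, map_sum]
  have key : ∀ i ∈ Finset.Ico (0 : ℤ) (2 * t), hL t (hFam (-(t : ℤ)) i (eD ∅)) = eD ∅ := by
    intro i hi
    rw [Finset.mem_Ico] at hi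
    simp only [hFam, LinearMap.smul_apply, NO_apply, map_smul]
    rw [if_pos hi.1, hL_a, hL_a, hL_vac t (by omega), vac_an (_ - 2 * (t : ℤ)) (by omega),
      a_swap (i - 2 * t), if_pos (by ring), vac_an (i - 2 * t) (by omega)]
    simp only [map_zero, smul_zero, add_zero, zero_add, sub_zero, one_smul, smul_smul]
    rw [← mul_zpow]; simp
  rw [Finset.sum_congr rfl key]
  simp
  rw [← Nat.cast_smul_eq_nsmul ℂ, smul_smul]
  congr 1
  rw [show ((2 * (t : ℤ)).toNat) = 2 * t by omega]
  push_cast; ring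

lemma heis (m n : ℤ) (x : FockD) :
    hL m (hL n x) - hL n (hL m x) = (if m + n = 0 then (m : ℂ) else 0) • x := by
  rw [← hComm_apply]
  split_ifs with h
  · obtain rfl : n = -m := by omega
    apply schur _ (hComm_a _ _)
    rw [hComm_apply]
    rcases le_or_gt 0 m with hm | hm
    · obtain ⟨t, rfl⟩ := Int.eq_ofNat_of_zero_le hm
      rw [hL_vac_neg, hL_vac _ hm]; simp
    · obtain ⟨t, ht⟩ := Int.eq_ofNat_of_zero_le (show 0 ≤ -m by omega)
      obtain rfl : m = -(t : ℤ) := by omega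
      rw [neg_neg, hL_vac_neg, hL_vac t (by omega)]; simp
  · rw [hComm_of_ne m n h, zero_smul]

/-! ### The Virasoro operators `L¹` -/

/-- Bosonic normal ordered product. -/
def BN (j k : ℤ) : FockD →ₗ[ℂ] FockD :=
  if j ≤ k then (hL j).comp (hL k) else (hL k).comp (hL j)

lemma BN_apply (j k : ℤ) (x : FockD) :
    BN j k x = if j ≤ k then hL j (hL k x) else hL k (hL j x) := by
  unfold BN; split_ifs <;> rfl

lemma BN_fin (n : ℤ) (x : FockD) : (Function.support fun j => BN j (n - j) x).Finite := by
  obtain ⟨K, hK0, hK⟩ := h_local x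
  apply (Set.finite_Icc (n - K) K).subset
  intro j hj
  by_contra h
  apply hj
  simp only [Set.mem_Icc, not_and_or, not_le] at h
  simp only [BN_apply]
  split_ifs with h0
  · rw [hK (n - j) (by omega), map_zero]
  · rw [hK j (by omega), map_zero]

/-- `L¹_n` as a linear map. -/
def LL (n : ℤ) : FockD →ₗ[ℂ] FockD :=
  (1 / 2 : ℂ) • locSum (fun j => BN j (n - j)) (BN_fin n)

lemma LL_apply (n : ℤ) (x : FockD) : LL n x = (1 / 2 : ℂ) • ∑ᶠ j, BN j (n - j) x := rfl

lemma L1D_eq (n : ℤ) (x : FockD) : L1D n x = LL n x := by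
  rw [LL_apply]
  simp only [BN_apply]
  rfl

lemma h_swap (m n : ℤ) (x : FockD) :
    hL m (hL n x) = hL n (hL m x) + (if m + n = 0 then (m : ℂ) else 0) • x := by
  rw [← heis m n x]; abel

lemma BN_h (j k l : ℤ) (x : FockD) :
    BN j k (hL l x) = hL l (BN j k x) + (if k + l = 0 then (k : ℂ) else 0) • hL j x
      + (if j + l = 0 then (j : ℂ) else 0) • hL k x := by
  rw [BN_apply, BN_apply]
  by_cases h : j ≤ k
  · rw [if_pos h, if_pos h, h_swap k l, map_add, map_smul, h_swap j l]
    module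
  · rw [if_neg h, if_neg h, h_swap j l, map_add, map_smul, h_swap k l]

lemma LL_h (n k : ℤ) (x : FockD) :
    LL n (hL k x) = hL k (LL n x) + (-(k : ℂ)) • hL (n + k) x := by
  have hf : (Function.support fun j => hL k (BN j (n - j) x)).Finite := by
    apply (BN_fin n x).subset
    intro i hi h
    exact hi (by simp only [h, map_zero])
  have key : ∀ j, BN j (n - j) (hL k x) = (hL k (BN j (n - j) x)
      + (if j = n + k then (-(k : ℂ)) • hL j x else 0))
      + (if j = -k then (-(k : ℂ)) • hL (n - j) x else 0) := by
    intro j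
    rw [BN_h]
    congr 1
    · congr 1
      by_cases h : j = n + k
      · rw [if_pos (by omega), if_pos h, h]; congr 1; push_cast; ring
      · rw [if_neg (by omega), if_neg h, zero_smul]
    · by_cases h : j = -k
      · rw [if_pos (by omega), if_pos h, h]; congr 1; push_cast; ring
      · rw [if_neg (by omega), if_neg h, zero_smul]
  rw [LL_apply, LL_apply]
  simp only [key]
  rw [finsum_add_distrib _ (ite_supp _ _), finsum_add_distrib hf (ite_supp _ _),
    finsum_ite_eq_single, finsum_ite_eq_single, map_smul, map_finsum _ (BN_fin n x)]
  · rw [sub_neg_eq_add]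
    module
  · exact (hf.union (ite_supp _ _)).subset (Function.support_add _ _)

/-- Anomalous term. -/
def corr (m j : ℤ) : ℂ :=
  (j : ℂ) * (m + j) * ((if 0 < j then 1 else 0) - (if 0 < m + j then 1 else 0))

lemma BN_ne (j k : ℤ) (h : j + k ≠ 0) (x : FockD) : BN j k x = hL j (hL k x) := by
  rw [BN_apply]
  split_ifs
  · rfl
  · rw [h_swap k j, if_neg (by omega)]; simp

lemma BN_neg (j k : ℤ) (h : j + k = 0) (x : FockD) :
    hL j (hL k x) = BN j k x + (if 0 < j then (j : ℂ) else 0) • x := by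
  rw [BN_apply]
  by_cases hj : 0 < j
  · rw [if_neg (by omega), if_pos hj, h_swap j k, if_pos h]
  · rw [if_pos (by omega), if_neg hj]; simp

lemma BN_neg' (j k : ℤ) (h : j + k = 0) (x : FockD) :
    hL k (hL j x) = BN j k x + (if 0 < j then 0 else -(j : ℂ)) • x := by
  rw [h_swap k j, BN_neg j k h, if_pos (show k + j = 0 by omega)]
  have : (k : ℂ) = -j := by
    have : k = -j := by omega
    rw [this]; push_cast; ring
  rw [this]
  split_ifs <;> module

lemma LL_BN (m n j : ℤ) (x : FockD) :
    LL m (BN j (n - j) x) = BN j (n - j) (LL m x) + (-(j : ℂ)) • BN (m + j) (m + n - (m + j)) x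
      + (-((n : ℂ) - j)) • BN j (m + n - j) x
      + (if m + n = 0 then corr m j else 0) • x := by
  have e1 : m + n - (m + j) = n - j := by ring
  have e2 : m + (n - j) = m + n - j := by ring
  rw [e1]
  have key : LL m (BN j (n - j) x) = BN j (n - j) (LL m x) +
      (if j ≤ n - j then (-(j : ℂ)) • hL (m + j) (hL (n - j) x)
          + (-((n : ℂ) - j)) • hL j (hL (m + n - j) x)
        else (-(j : ℂ)) • hL (n - j) (hL (m + j) x)
          + (-((n : ℂ) - j)) • hL (m + n - j) (hL j x)) := by
    rw [BN_apply, BN_apply]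
    split_ifs
    · simp only [LL_h, map_add, map_smul, e2]; push_cast; module
    · simp only [LL_h, map_add, map_smul, e2]; push_cast; module
  rw [key]
  by_cases h : m + n = 0
  · have hn : (n : ℂ) = -m := by
      have : n = -m := by omega
      rw [this]; push_cast; ring
    rw [if_pos h, BN_neg (m + j) (n - j) (by omega), BN_neg j (m + n - j) (by omega),
      BN_neg' (m + j) (n - j) (by omega), BN_neg' j (m + n - j) (by omega), hn]
    unfold corr
    split_ifs <;> push_cast <;> try module
  · rw [if_neg h, BN_ne (m + j) (n - j) (by omega), BN_ne j (m + n - j) (by omega),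
      h_swap (n - j) (m + j), if_neg (show ¬ n - j + (m + j) = 0 by omega),
      h_swap (m + n - j) j, if_neg (show ¬ m + n - j + j = 0 by omega)]
    split_ifs <;> module

lemma sum_aux (s : ℂ) (t : ℕ) : ∑ k ∈ Finset.range t, (k : ℂ) * (s - k)
    = s * (t * (t - 1) / 2) - (t - 1) * t * (2 * t - 1) / 6 := by
  induction t with
  | zero => simp
  | succ t ih => rw [Finset.sum_range_succ, ih]; push_cast; ring

lemma corr_supp (m : ℤ) : (Function.support (corr m)).Finite := by
  apply (Set.finite_Icc (-|m|) |m|).subset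
  intro j hj
  by_contra h
  apply hj
  simp only [Set.mem_Icc, not_and_or, not_le] at h
  have h1 := le_abs_self m
  have h2 := neg_abs_le m
  unfold corr
  split_ifs <;> first | (exfalso; omega) | ring

lemma corr_sum (m : ℤ) : ∑ᶠ j, corr m j = ((m : ℂ) ^ 3 - m) / 6 := by
  rcases le_or_gt 0 m with hm | hm
  · obtain ⟨t, rfl⟩ := Int.eq_ofNat_of_zero_le hm
    rw [finsum_eq_sum_of_support_subset (s := (Finset.range t).image (fun k : ℕ => -(k : ℤ))),
      Finset.sum_image (by intro a _ b _ h; simpa using h)]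
    · have : ∀ k ∈ Finset.range t, corr t (-(k : ℤ)) = (k : ℂ) * ((t : ℂ) - k) := by
        intro k hk
        rw [Finset.mem_range] at hk
        unfold corr
        rw [if_neg (by omega), if_pos (by omega)]
        push_cast; ring
      rw [Finset.sum_congr rfl this, sum_aux]
      push_cast; ring
    · intro j hj
      by_contra h
      apply hj
      simp only [Finset.coe_image, Finset.coe_range, Set.mem_image, Set.mem_Iio, not_exists,
        not_and] at h
      have := h (-j).toNat
      unfold corr
      split_ifs <;> first | (exfalso; omega) | ring
  · obtain ⟨t, ht⟩ := Int.eq_ofNat_of_zero_le (show 0 ≤ -m by omega)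
    obtain rfl : m = -(t : ℤ) := by omega
    rw [finsum_eq_sum_of_support_subset (s := (Finset.range t).image (fun k : ℕ => (k : ℤ))),
      Finset.sum_image (by intro a _ b _ h; simpa using h)]
    · have : ∀ k ∈ Finset.range t, corr (-(t : ℤ)) (k : ℤ) = -((k : ℂ) * ((t : ℂ) - k)) := by
        intro k hk
        rw [Finset.mem_range] at hk
        unfold corr
        rcases Nat.eq_zero_or_pos k with rfl | h
        · simp
        · rw [if_pos (by omega), if_neg (by omega)]
          push_cast; ring
      rw [Finset.sum_congr rfl this, Finset.sum_neg_distrib, sum_aux]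
      push_cast; ring
    · intro j hj
      by_contra h
      apply hj
      simp only [Finset.coe_image, Finset.coe_range, Set.mem_image, Set.mem_Iio, not_exists,
        not_and] at h
      have := h j.toNat
      by_cases hjt : j = t
      · unfold corr
        rw [hjt]; push_cast; ring
      · unfold corr
        split_ifs <;> first | (exfalso; omega) | ring

lemma LL_LL (m n : ℤ) (x : FockD) :
    LL m (LL n x) = LL n (LL m x) + ((m : ℂ) - n) • LL (m + n) x
      + (if m + n = 0 then ((m : ℂ) ^ 3 - m) / 12 else 0) • x := by
  have fc : ∀ c : ℤ → ℂ, (Function.support fun j => c j • BN j (m + n - j) x).Finite := by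
    intro c
    apply (BN_fin (m + n) x).subset
    intro j hj h
    exact hj (by simp only [h, smul_zero])
  let g : ℤ → FockD := fun j => (-((j : ℂ) - m)) • BN j (m + n - j) x
  have hg : (Function.support g).Finite := fc fun j => (-((j : ℂ) - m))
  have hshift : ∀ j : ℤ, (-(j : ℂ)) • BN (m + j) (m + n - (m + j)) x = g (Equiv.addLeft m j) := by
    intro j
    simp only [g, Equiv.coe_addLeft]
    congr 1
    push_cast; ring
  have hg' : (Function.support fun j => g (Equiv.addLeft m j)).Finite :=
    hg.preimage (Equiv.injective _).injOn
  have hcs : (Function.support fun j => (if m + n = 0 then corr m j else 0)).Finite := by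
    split_ifs
    · exact corr_supp m
    · simp
  have hc : (Function.support fun j => (if m + n = 0 then corr m j else 0) • x).Finite := by
    apply hcs.subset
    intro j hj h
    exact hj (by simp only [h, zero_smul])
  have h2 := fc fun j => (-((n : ℂ) - j))
  have s1 := (BN_fin n (LL m x)).union hg'
  have s1' := s1.subset (Function.support_add _ _)
  have s2' := (s1'.union h2).subset (Function.support_add _ _)
  rw [LL_apply n x, map_smul, map_finsum _ (BN_fin n x)]
  simp only [LL_BN, hshift]
  rw [finsum_add_distrib s2' hc, finsum_add_distrib s1' h2,
    finsum_add_distrib (BN_fin n (LL m x)) hg', finsum_comp_equiv]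
  have hA : ∑ᶠ j, g j + ∑ᶠ j : ℤ, (-((n : ℂ) - j)) • BN j (m + n - j) x
      = ((m : ℂ) - n) • ∑ᶠ j, BN j (m + n - j) x := by
    rw [← finsum_add_distrib hg h2, smul_finsum]
    apply finsum_congr
    intro j
    simp only [g]
    module
  have hB : ∑ᶠ j, (if m + n = 0 then corr m j else 0) • x
      = (if m + n = 0 then ((m : ℂ) ^ 3 - m) / 6 else 0) • x := by
    rw [← finsum_smul]
    congr 1
    split_ifs
    · exact corr_sum m
    · simp
  rw [add_assoc (∑ᶠ j, BN j (n - j) (LL m x)), hA, hB, LL_apply n, LL_apply (m + n)]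
  split_ifs <;> module

/-- For every `λ, b ∈ ℂ` the operators `L^{λ,b}_n` satisfy the Virasoro relations with
central charge `−12λ² + 12λ − 2`; and for `λ = 1/2`, `b = 0` one recovers
`L^{1/2,0}_n = L¹_n` (of central charge `1`). -/
theorem virasoro_two_parameter_family (lam b : ℂ) :
    (∀ (m n : ℤ) (x : FockD),
      Llb lam b m (Llb lam b n x) - Llb lam b n (Llb lam b m x)
        = ((m - n : ℤ) : ℂ) • Llb lam b (m + n) x
          + (if m = -n then
              ((m ^ 3 - m : ℤ) : ℂ) / 12 * (-12 * lam ^ 2 + 12 * lam - 2) else 0) • x) ∧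
    (∀ (n : ℤ) (x : FockD), Llb (1 / 2) 0 n x = L1D n x) := by
  refine ⟨fun m n x => ?_, fun n x => ?_⟩
  · have hL' : ∀ n x, Llb lam b n x = LL n x + ((lam - 1 / 2) * ((n : ℂ) + 1 / 2) - b) • hL n x
        + (if n = 0 then Mconst lam b else 0) • x := by
      intro n x
      rw [Llb, L1D_eq, hD_eq]
    simp only [hL', map_add, map_smul]
    rw [LL_LL m n, LL_h m n, LL_h n m, h_swap m n, add_comm n m]
    by_cases h : m + n = 0
    · obtain rfl : n = -m := by omega
      simp only [add_neg_cancel, if_true, neg_neg, Mconst]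
      push_cast
      module
    · rw [if_neg h, if_neg h, if_neg h, if_neg (show ¬ m = -n by omega)]
      push_cast
      module
  · rw [Llb]
    simp [Mconst]
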